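/- Let Γ be a Shilla distance-regular graph with b(Γ) = b and smallest eigenvalue θ₃. Then θ₃ < -b² + 2 if and only if b = 2. -/

import Mathlib

open Finset SimpleGraph

/-- `G` is a distance-regular graph with diameter `D` and intersection numbers
`b i`, `c i`, `a i` (so valency `k = b 0` and `a i = k - b i - c i`). -/
structure IsDRG {V : Type*} [Fintype V] (G : SimpleGraph V) (D : ℕ)
    (b c a : ℕ → ℕ) : Prop where
  connected : G.Connected
  le_diam : ∀ x y : V, G.dist x y ≤ D
  exists_diam : ∃ x y : V, G.dist x y = D
  card_b : ∀ i, i ≤ D → ∀ x y : V, G.dist x y = i →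
      Nat.card {z : V | G.Adj y z ∧ G.dist x z = i + 1} = b i
  card_c : ∀ i, i ≤ D → ∀ x y : V, G.dist x y = i →
      Nat.card {z : V | G.Adj y z ∧ G.dist x z = i - 1} = c i
  card_a : ∀ i, i ≤ D → ∀ x y : V, G.dist x y = i →
      Nat.card {z : V | G.Adj y z ∧ G.dist x z = i} = a i

/-- `θ` is an eigenvalue of the adjacency matrix of `G`. -/
def IsEig {V : Type*} [Fintype V] [DecidableEq V] (G : SimpleGraph V)
    [DecidableRel G.Adj] (θ : ℝ) : Prop :=
  ∃ v : V → ℝ, v ≠ 0 ∧ (G.adjMatrix ℝ).mulVec v = θ • v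

/-- `θ` is the second largest eigenvalue of `G` (`k` being the largest). -/
def IsSecondLargestEig {V : Type*} [Fintype V] [DecidableEq V] (G : SimpleGraph V)
    [DecidableRel G.Adj] (k θ : ℝ) : Prop :=
  IsEig G θ ∧ θ < k ∧ ∀ η : ℝ, IsEig G η → η ≠ k → η ≤ θ

/-- `θ` is the smallest eigenvalue of `G`. -/
def IsSmallestEig {V : Type*} [Fintype V] [DecidableEq V] (G : SimpleGraph V)
    [DecidableRel G.Adj] (θ : ℝ) : Prop :=
  IsEig G θ ∧ ∀ η : ℝ, IsEig G η → θ ≤ η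

/-- The multiplicity of `θ` as an eigenvalue of the adjacency matrix of `G`. -/
noncomputable def eigMult {V : Type*} [Fintype V] [DecidableEq V] (G : SimpleGraph V)
    [DecidableRel G.Adj] (θ : ℝ) : ℕ :=
  Module.finrank ℝ ↥(Module.End.eigenspace (Matrix.toLin' (G.adjMatrix ℝ)) θ)

/-- A Shilla distance-regular graph: diameter `3` and second largest eigenvalue `a 3`. -/
structure IsShilla {V : Type*} [Fintype V] [DecidableEq V] (G : SimpleGraph V)
    [DecidableRel G.Adj] (b c a : ℕ → ℕ) : Prop where
  drg : IsDRG G 3 b c a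
  second : IsSecondLargestEig G (b 0) ((a 3 : ℝ))

/-!
If `b(Γ) = 2` the quadratic satisfied by the nontrivial eigenvalues other than `θ₁ = a₃` has a root
below `-b = -b² + 2`. For `b ≥ 3` suppose that `θ₃ < -b² + 2`; the Krein condition gives
`-b² < θ₃`.

* If `θ₃` is irrational, then by Biggs' formula the norm of its standard sequence is rational, and
  so the `θ₃`-coefficient of this norm vanishes. With the Krein condition this forces
  `b₂ + c₂ = a₃ + b - 1` and `b ∈ {3, 4}`, where a divisibility bounds `a₃` too strongly.
* If `θ₃` is rational, it is the integer `1 - b²`, and divisibility gives `c₂ = (b² - b - 1)t`.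
  The Krein condition makes `a₃` large compared with `b` and `t`. This contradicts the
  positivity of the projection onto the eigenspace of `θ₃`, tested on an edge together with its
  common neighbours.
-/

namespace IsDRG

variable {V : Type*} [Fintype V] {G : SimpleGraph V} {D : ℕ} {b c a : ℕ → ℕ}

lemma c_zero (h : IsDRG G D b c a) : c 0 = 0 := by
  obtain ⟨x, -⟩ := h.exists_diam
  rw [← h.card_c 0 D.zero_le x x dist_self, Nat.card_eq_zero]
  exact .inl ⟨fun ⟨z, hxz, hz⟩ => by simp [dist_eq_one_iff_adj.2 hxz] at hz⟩

lemma a_zero (h : IsDRG G D b c a) : a 0 = 0 := by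
  obtain ⟨x, -⟩ := h.exists_diam
  rw [← h.card_a 0 D.zero_le x x dist_self, Nat.card_eq_zero]
  exact .inl ⟨fun ⟨z, hxz, hz⟩ => by simp [dist_eq_one_iff_adj.2 hxz] at hz⟩

lemma b_diam (h : IsDRG G D b c a) : b D = 0 := by
  obtain ⟨x, y, hxy⟩ := h.exists_diam
  rw [← h.card_b D le_rfl x y hxy, Nat.card_eq_zero]
  exact .inl ⟨fun ⟨z, _, hz⟩ => by have := h.le_diam x z; lia⟩

lemma exists_adj_dist_eq (h : IsDRG G D b c a) {x y : V} {i : ℕ} (hxy : G.dist x y = i + 1) :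
    ∃ z, G.Adj z y ∧ G.dist x z = i := by
  obtain ⟨p, hp⟩ := h.connected.exists_walk_length_eq_dist y x
  rw [dist_comm, hxy] at hp
  cases p with
  | nil => simp at hp
  | @cons _ z _ hyz p =>
    refine ⟨z, hyz.symm, ?_⟩
    have hle := dist_le p
    have hdiff := hyz.diff_dist_adj (u := x)
    rw [Walk.length_cons] at hp
    rw [dist_comm] at hle
    lia

lemma exists_dist_eq (h : IsDRG G D b c a) {i : ℕ} (hi : i ≤ D) : ∃ x y, G.dist x y = i := by
  induction hi using Nat.decreasingInduction with
  | self => exact h.exists_diam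
  | of_succ i _ ih =>
    obtain ⟨x, y, hxy⟩ := ih
    obtain ⟨z, -, hz⟩ := h.exists_adj_dist_eq hxy
    exact ⟨x, z, hz⟩

lemma c_succ_pos (h : IsDRG G D b c a) {i : ℕ} (hi : i < D) : 0 < c (i + 1) := by
  obtain ⟨x, y, hxy⟩ := h.exists_dist_eq hi
  obtain ⟨z, hzy, hz⟩ := h.exists_adj_dist_eq hxy
  rw [← h.card_c (i + 1) hi x y hxy]
  exact Nat.card_pos_iff.2 ⟨⟨⟨z, hzy.symm, hz⟩⟩, inferInstance⟩

lemma b_pos (h : IsDRG G D b c a) {i : ℕ} (hi : i < D) : 0 < b i := by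
  obtain ⟨x, y, hxy⟩ := h.exists_dist_eq hi
  obtain ⟨z, hzy, hz⟩ := h.exists_adj_dist_eq hxy
  rw [← h.card_b i hi.le x z hz]
  exact Nat.card_pos_iff.2 ⟨⟨⟨y, hzy, hxy⟩⟩, inferInstance⟩

lemma c_one (h : IsDRG G D b c a) (hD : 1 ≤ D) : c 1 = 1 := by
  obtain ⟨x, y, hxy⟩ := h.exists_dist_eq hD
  rw [← h.card_c 1 hD x y hxy, Nat.card_eq_one_iff_exists]
  refine ⟨⟨x, (dist_eq_one_iff_adj.1 hxy).symm, dist_self⟩, ?_⟩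
  rintro ⟨z, -, hz⟩
  exact Subtype.ext (h.connected.dist_eq_zero_iff.1 hz).symm

lemma sum_neighborFinset {M : Type*} [AddCommMonoid M] [DecidableRel G.Adj]
    (h : IsDRG G D b c a) (f : ℕ → M) (x y : V) :
    ∑ z ∈ G.neighborFinset y, f (G.dist x z) =
      c (G.dist x y) • f (G.dist x y - 1) + a (G.dist x y) • f (G.dist x y)
        + b (G.dist x y) • f (G.dist x y + 1) := by
  have hcard (j : ℕ) :
      Nat.card {z | G.Adj y z ∧ G.dist x z = j} = #{z ∈ G.neighborFinset y | G.dist x z = j} :=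
    Nat.subtype_card _ (by simp)
  have hD := h.le_diam x y
  have hdiff (z : V) (hz : z ∈ G.neighborFinset y) :=
    ((G.mem_neighborFinset y z).1 hz).diff_dist_adj (u := x)
  have hb := h.card_b _ hD x y rfl
  have hc := h.card_c _ hD x y rfl
  have ha := h.card_a _ hD x y rfl
  rw [hcard] at hb hc ha
  obtain h0 | h0 := Nat.eq_zero_or_pos (G.dist x y)
  · obtain rfl := h.connected.dist_eq_zero_iff.1 h0
    have hone : ∀ z ∈ G.neighborFinset x, G.dist x z = G.dist x x + 1 := fun z hz => by
      rw [dist_self, dist_eq_one_iff_adj.2 ((G.mem_neighborFinset x z).1 hz)]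
    rw [Finset.filter_true_of_mem hone] at hb
    simp only [Finset.sum_congr rfl fun z hz => congrArg f (hone z hz), Finset.sum_const, hb, h0,
      h.c_zero, h.a_zero, zero_nsmul, zero_add]
  rw [← Finset.sum_fiberwise_of_maps_to' (t := {G.dist x y - 1, G.dist x y, G.dist x y + 1})
    (g := G.dist x) (by grind)]
  simp only [Finset.sum_const]
  rw [Finset.sum_insert (by grind), Finset.sum_pair (by lia), hb, hc, ha, add_assoc]

lemma degree_eq [DecidableRel G.Adj] (h : IsDRG G D b c a) (x : V) : G.degree x = b 0 := by
  have := h.sum_neighborFinset (fun _ => 1) x x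
  simpa [h.c_zero, h.a_zero] using this

lemma c_add_a_add_b (h : IsDRG G D b c a) {i : ℕ} (hi : i ≤ D) : c i + a i + b i = b 0 := by
  classical
  obtain ⟨x, y, rfl⟩ := h.exists_dist_eq hi
  have hsum := h.sum_neighborFinset (fun _ => 1) x y
  simpa [h.degree_eq] using hsum.symm

end IsDRG

/-! ### Standard sequences and the Krein condition -/

open scoped Matrix

/-- The size `kᵢ` of a sphere of radius `i` in a distance-regular graph with intersection numbers
`b i`, `c i`, as a real number. -/
noncomputable def sphereSize (b c : ℕ → ℕ) (i : ℕ) : ℝ :=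
  ∏ j ∈ range i, (b j / c (j + 1) : ℝ)

/-- The inner product `∑ kᵢ fᵢ gᵢ` of functions of the distance, for which the standard sequences
of distinct eigenvalues are orthogonal. -/
noncomputable def sphereInner (D : ℕ) (b c : ℕ → ℕ) (f g : ℕ → ℝ) : ℝ :=
  ∑ i ∈ range (D + 1), sphereSize b c i * f i * g i

/-- The tridiagonal operator through which the adjacency matrix acts on functions of the distance
to a fixed vertex. At `i = 0` the truncated index `i - 1` is harmless, as `c 0 = 0`. -/
def intersectionOp (b c a : ℕ → ℕ) (f : ℕ → ℝ) (i : ℕ) : ℝ :=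
  c i * f (i - 1) + a i * f i + b i * f (i + 1)

/-- `u` is the standard (cosine) sequence of the eigenvalue `θ`: the values `u i` for `i ≤ D` form
an eigenvector of the intersection matrix, normalised by `u 0 = 1`. -/
structure IsStandardSeq (D : ℕ) (b c a : ℕ → ℕ) (θ : ℝ) (u : ℕ → ℝ) : Prop where
  zero : u 0 = 1
  recurrence : ∀ i ≤ D, intersectionOp b c a u i = θ * u i

/-- The matrix whose `(x, y)` entry is `u (dist x y)`: an element of the Bose-Mesner algebra. -/
noncomputable def distMatrix {V : Type*} (G : SimpleGraph V) (u : ℕ → ℝ) : Matrix V V ℝ :=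
  .of fun x y => u (G.dist x y)

/-- The sum of `w` over the sphere of radius `i` around `x`. -/
noncomputable def sphereSum {V : Type*} [Fintype V] (G : SimpleGraph V) (w : V → ℝ) (x : V)
    (i : ℕ) : ℝ :=
  (distMatrix G (Pi.single i 1) *ᵥ w) x

section DistMatrix

variable {V : Type*} {G : SimpleGraph V}

lemma distMatrix_transpose (u : ℕ → ℝ) : (distMatrix G u).transpose = distMatrix G u := by
  ext x y
  exact congrArg u G.dist_comm

lemma distMatrix_add (u v : ℕ → ℝ) : distMatrix G (u + v) = distMatrix G u + distMatrix G v :=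
  rfl

lemma distMatrix_smul (r : ℝ) (u : ℕ → ℝ) : distMatrix G (r • u) = r • distMatrix G u :=
  rfl

lemma distMatrix_hadamard (u v : ℕ → ℝ) :
    distMatrix G u ⊙ distMatrix G v = distMatrix G (u * v) :=
  rfl

lemma distMatrix_trace [Fintype V] (u : ℕ → ℝ) :
    (distMatrix G u).trace = Fintype.card V * u 0 := by
  simp [Matrix.trace, distMatrix]

end DistMatrix

lemma sphereSize_zero (b c : ℕ → ℕ) : sphereSize b c 0 = 1 := by
  rw [sphereSize, range_zero, prod_empty]

namespace IsDRG

variable {V : Type*} [Fintype V] {G : SimpleGraph V} {D : ℕ} {b c a : ℕ → ℕ} {θ : ℝ}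

lemma c_mul_sphereSize_succ (h : IsDRG G D b c a) {i : ℕ} (hi : i < D) :
    c (i + 1) * sphereSize b c (i + 1) = b i * sphereSize b c i := by
  have hc : (c (i + 1) : ℝ) ≠ 0 := Nat.cast_ne_zero.2 (h.c_succ_pos hi).ne'
  rw [sphereSize, prod_range_succ, ← sphereSize]
  field_simp

lemma sphereSize_pos (h : IsDRG G D b c a) {i : ℕ} (hi : i ≤ D) : 0 < sphereSize b c i :=
  prod_pos fun j hj => by
    have hjD : j < D := (mem_range.1 hj).trans_le hi
    exact div_pos (Nat.cast_pos.2 (h.b_pos hjD)) (Nat.cast_pos.2 (h.c_succ_pos hjD))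

lemma distMatrix_congr (h : IsDRG G D b c a) {u v : ℕ → ℝ} (huv : ∀ i ≤ D, u i = v i) :
    distMatrix G u = distMatrix G v := by
  ext x y
  exact huv _ (h.le_diam x y)

lemma distMatrix_single_zero [DecidableEq V] (h : IsDRG G D b c a) :
    distMatrix G (Pi.single 0 1) = 1 := by
  ext x y
  simp [distMatrix, Matrix.one_apply, Pi.single_apply, h.connected.dist_eq_zero_iff]

lemma sphereSum_zero (h : IsDRG G D b c a) (w : V → ℝ) (x : V) : sphereSum G w x 0 = w x := by
  classical
  rw [sphereSum, h.distMatrix_single_zero, Matrix.one_mulVec]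

lemma sphereSum_eq_zero (h : IsDRG G D b c a) (w : V → ℝ) (x : V) {i : ℕ} (hi : D < i) :
    sphereSum G w x i = 0 := by
  rw [sphereSum, h.distMatrix_congr (v := 0) fun j hj => Pi.single_eq_of_ne (by lia) 1]
  simp [distMatrix, Matrix.mulVec, dotProduct]

lemma distMatrix_eq_sum_single (h : IsDRG G D b c a) (f : ℕ → ℝ) :
    distMatrix G f = ∑ i ∈ range (D + 1), f i • distMatrix G (Pi.single i 1) := by
  ext x y
  have := h.le_diam x y
  simp [distMatrix, Matrix.sum_apply, Pi.single_apply, this]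

lemma sphereInner_self_pos (h : IsDRG G D b c a) {u : ℕ → ℝ} (hu : IsStandardSeq D b c a θ u) :
    0 < sphereInner D b c u u := by
  refine sum_pos' (fun i hi => ?_) ⟨0, by simp, ?_⟩
  · rw [mul_assoc]
    exact mul_nonneg (h.sphereSize_pos (mem_range_succ_iff.1 hi)).le (mul_self_nonneg _)
  · simp [sphereSize_zero, hu.zero]

section Eigenvectors

variable [DecidableRel G.Adj]

lemma adjMatrix_mul_distMatrix (h : IsDRG G D b c a) (f : ℕ → ℝ) :
    G.adjMatrix ℝ * distMatrix G f = distMatrix G (intersectionOp b c a f) := by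
  ext x y
  simp only [adjMatrix_mul_apply, distMatrix, Matrix.of_apply, G.dist_comm (v := y),
    h.sum_neighborFinset f y x, nsmul_eq_mul, intersectionOp]

lemma distMatrix_mul_adjMatrix (h : IsDRG G D b c a) (f : ℕ → ℝ) :
    distMatrix G f * G.adjMatrix ℝ = distMatrix G (intersectionOp b c a f) := by
  simpa only [Matrix.transpose_mul, transpose_adjMatrix, distMatrix_transpose] using
    congrArg Matrix.transpose (h.adjMatrix_mul_distMatrix f)

lemma distMatrix_intersectionOp_mulVec (h : IsDRG G D b c a) {w : V → ℝ}
    (hw : G.adjMatrix ℝ *ᵥ w = θ • w) (f : ℕ → ℝ) :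
    distMatrix G (intersectionOp b c a f) *ᵥ w = θ • distMatrix G f *ᵥ w := by
  rw [← h.distMatrix_mul_adjMatrix, ← Matrix.mulVec_mulVec, hw, Matrix.mulVec_smul]

lemma c_one_mul_sphereSum_one (h : IsDRG G D b c a) {w : V → ℝ}
    (hw : G.adjMatrix ℝ *ᵥ w = θ • w) (x : V) :
    c 1 * sphereSum G w x 1 = θ * sphereSum G w x 0 := by
  have hop : intersectionOp b c a (Pi.single 0 1) = (c 1 : ℝ) • Pi.single 1 1 := by
    ext j
    obtain _ | _ | j := j <;> simp [intersectionOp, h.c_zero, h.a_zero]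
  have := congrFun (h.distMatrix_intersectionOp_mulVec hw (Pi.single 0 1)) x
  simpa only [sphereSum, hop, distMatrix_smul, Matrix.smul_mulVec, Pi.smul_apply,
    smul_eq_mul] using this

lemma sphereSum_recurrence (h : IsDRG G D b c a) {w : V → ℝ}
    (hw : G.adjMatrix ℝ *ᵥ w = θ • w) (x : V) (i : ℕ) :
    c (i + 2) * sphereSum G w x (i + 2) + a (i + 1) * sphereSum G w x (i + 1)
      + b i * sphereSum G w x i = θ * sphereSum G w x (i + 1) := by
  have hop : intersectionOp b c a (Pi.single (i + 1) 1) =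
      (c (i + 2) : ℝ) • Pi.single (i + 2) 1 + (a (i + 1) : ℝ) • Pi.single (i + 1) 1
        + (b i : ℝ) • Pi.single i 1 := by
    ext j
    simp only [intersectionOp, Pi.add_apply, Pi.smul_apply, Pi.single_apply, smul_eq_mul]
    grind
  have := congrFun (h.distMatrix_intersectionOp_mulVec hw (Pi.single (i + 1) 1)) x
  simpa only [sphereSum, hop, distMatrix_add, distMatrix_smul, Matrix.add_mulVec,
    Matrix.smul_mulVec, Pi.add_apply, Pi.smul_apply, smul_eq_mul] using this

lemma sphereSum_eq_of_isStandardSeq (h : IsDRG G D b c a) {w : V → ℝ}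
    (hw : G.adjMatrix ℝ *ᵥ w = θ • w) {u : ℕ → ℝ} (hu : IsStandardSeq D b c a θ u) (x : V)
    {i : ℕ} (hi : i ≤ D) : sphereSum G w x i = sphereSize b c i * u i * w x := by
  induction i using Nat.twoStepInduction with
  | zero => rw [h.sphereSum_zero, sphereSize_zero, hu.zero, one_mul, one_mul]
  | one =>
    have hc : (c 1 : ℝ) ≠ 0 := Nat.cast_ne_zero.2 (h.c_succ_pos hi).ne'
    have hk := h.c_mul_sphereSize_succ hi
    have hu0 := hu.recurrence 0 D.zero_le
    have hs := h.c_one_mul_sphereSum_one hw x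
    simp only [intersectionOp, h.c_zero, h.a_zero, hu.zero, Nat.cast_zero, zero_add,
      mul_one] at hu0
    rw [zero_add, sphereSize_zero, mul_one] at hk
    rw [h.sphereSum_zero] at hs
    apply mul_left_cancel₀ hc
    linear_combination hs - w x * u 1 * hk - w x * hu0
  | more i ih ih' =>
    have hc : (c (i + 2) : ℝ) ≠ 0 := Nat.cast_ne_zero.2 (h.c_succ_pos hi).ne'
    have hk := h.c_mul_sphereSize_succ (i := i) (by lia)
    have hk' := h.c_mul_sphereSize_succ hi
    have hu' := hu.recurrence (i + 1) (by lia)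
    have hs := h.sphereSum_recurrence hw x i
    rw [ih (by lia), ih' (by lia)] at hs
    rw [intersectionOp, add_tsub_cancel_right] at hu'
    apply mul_left_cancel₀ hc
    linear_combination hs - w x * u (i + 2) * hk' + w x * u i * hk
      - sphereSize b c (i + 1) * w x * hu'

lemma isStandardSeq_sphereSum (h : IsDRG G D b c a) {w : V → ℝ}
    (hw : G.adjMatrix ℝ *ᵥ w = θ • w) {x : V} (hx : w x ≠ 0) :
    IsStandardSeq D b c a θ fun i => sphereSum G w x i / (sphereSize b c i * w x) where
  zero := by rw [h.sphereSum_zero, sphereSize_zero, one_mul, div_self hx]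
  recurrence i hi := by
    have hk := (h.sphereSize_pos hi).ne'
    have hnext : (b i : ℝ) * (sphereSum G w x (i + 1) / (sphereSize b c (i + 1) * w x)) =
        c (i + 1) * sphereSum G w x (i + 1) / (sphereSize b c i * w x) := by
      obtain rfl | hlt := hi.eq_or_lt
      · simp [h.b_diam, h.sphereSum_eq_zero w x (Nat.lt_succ_self i)]
      · have hk' := (h.sphereSize_pos hlt).ne'
        field_simp
        linear_combination -sphereSum G w x (i + 1) * h.c_mul_sphereSize_succ hlt
    rw [intersectionOp, hnext]
    obtain _ | i := i
    · rw [h.c_zero, h.a_zero, zero_add, h.c_one_mul_sphereSum_one hw x]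
      ring
    · have hk' := (h.sphereSize_pos (i := i) (by lia)).ne'
      rw [add_tsub_cancel_right]
      field_simp
      linear_combination sphereSize b c i * h.sphereSum_recurrence hw x i
        + sphereSum G w x i * h.c_mul_sphereSize_succ (i := i) (by lia)

lemma adjMatrix_mul_distMatrix_of_isStandardSeq (h : IsDRG G D b c a) {u : ℕ → ℝ}
    (hu : IsStandardSeq D b c a θ u) :
    G.adjMatrix ℝ * distMatrix G u = θ • distMatrix G u := by
  rw [h.adjMatrix_mul_distMatrix, ← distMatrix_smul]
  exact h.distMatrix_congr hu.recurrence

lemma adjMatrix_mulVec_col_distMatrix (h : IsDRG G D b c a) {u : ℕ → ℝ}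
    (hu : IsStandardSeq D b c a θ u) (x : V) :
    G.adjMatrix ℝ *ᵥ (distMatrix G u).col x = θ • (distMatrix G u).col x :=
  congrArg (Matrix.col · x) (h.adjMatrix_mul_distMatrix_of_isStandardSeq hu)

lemma distMatrix_mulVec (h : IsDRG G D b c a) {w : V → ℝ} (hw : G.adjMatrix ℝ *ᵥ w = θ • w)
    {u : ℕ → ℝ} (hu : IsStandardSeq D b c a θ u) (f : ℕ → ℝ) :
    distMatrix G f *ᵥ w = sphereInner D b c f u • w := by
  ext x
  have hsum : (distMatrix G f *ᵥ w) x = ∑ i ∈ range (D + 1), f i * sphereSum G w x i := by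
    rw [h.distMatrix_eq_sum_single, Matrix.sum_mulVec, Finset.sum_apply]
    simp only [Matrix.smul_mulVec, Pi.smul_apply, smul_eq_mul, sphereSum]
  rw [hsum, Pi.smul_apply, smul_eq_mul, sphereInner, sum_mul]
  refine sum_congr rfl fun i hi => ?_
  rw [h.sphereSum_eq_of_isStandardSeq hw hu x (mem_range_succ_iff.1 hi)]
  ring

lemma isEig_iff_exists_isStandardSeq [DecidableEq V] (h : IsDRG G D b c a) :
    IsEig G θ ↔ ∃ u, IsStandardSeq D b c a θ u := by
  constructor
  · rintro ⟨w, hw0, hw⟩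
    obtain ⟨x, hx⟩ := Function.ne_iff.1 hw0
    exact ⟨_, h.isStandardSeq_sphereSum hw hx⟩
  · rintro ⟨u, hu⟩
    obtain ⟨x, -⟩ := h.exists_diam
    refine ⟨(distMatrix G u).col x, fun h0 => ?_, h.adjMatrix_mulVec_col_distMatrix hu x⟩
    simpa [distMatrix, hu.zero] using congrFun h0 x

/-- Biggs' multiplicity formula. -/
lemma eigMult_mul_sphereInner [DecidableEq V] (h : IsDRG G D b c a) {u : ℕ → ℝ}
    (hu : IsStandardSeq D b c a θ u) :
    eigMult G θ * sphereInner D b c u u = Fintype.card V := by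
  have hpos := h.sphereInner_self_pos hu
  set E := (sphereInner D b c u u)⁻¹ • distMatrix G u with hE
  have hproj : LinearMap.IsProj (Module.End.eigenspace (G.adjMatrix ℝ).toLin' θ) E.toLin' :=
    { map_mem := fun w => by
        rw [Module.End.mem_eigenspace_iff, Matrix.toLin'_apply, Matrix.toLin'_apply,
          Matrix.mulVec_mulVec, hE, Matrix.mul_smul,
          h.adjMatrix_mul_distMatrix_of_isStandardSeq hu, smul_comm, Matrix.smul_mulVec]
      map_id := fun w hw => by
        rw [Module.End.mem_eigenspace_iff, Matrix.toLin'_apply] at hw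
        rw [Matrix.toLin'_apply, hE, Matrix.smul_mulVec, h.distMatrix_mulVec hw hu, smul_smul,
          inv_mul_cancel₀ hpos.ne', one_smul] }
  have htrace := hproj.trace
  rw [Matrix.trace_toLin'_eq, hE, Matrix.trace_smul, distMatrix_trace, hu.zero, mul_one,
    smul_eq_mul, inv_mul_eq_iff_eq_mul₀ hpos.ne'] at htrace
  rw [eigMult, htrace, mul_comm]

end Eigenvectors

lemma distMatrix_mul_distMatrix (h : IsDRG G D b c a) {u : ℕ → ℝ}
    (hu : IsStandardSeq D b c a θ u) (f : ℕ → ℝ) :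
    distMatrix G f * distMatrix G u = sphereInner D b c f u • distMatrix G u := by
  classical
  ext x y
  exact congrFun (h.distMatrix_mulVec (h.adjMatrix_mulVec_col_distMatrix hu y) hu f) x

lemma posSemidef_distMatrix (h : IsDRG G D b c a) {u : ℕ → ℝ}
    (hu : IsStandardSeq D b c a θ u) : (distMatrix G u).PosSemidef := by
  have hsq := Matrix.posSemidef_conjTranspose_mul_self (distMatrix G u)
  rw [Matrix.conjTranspose_eq_transpose_of_trivial, distMatrix_transpose,
    h.distMatrix_mul_distMatrix hu] at hsq
  have hpos := h.sphereInner_self_pos hu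
  simpa [smul_smul, hpos.ne'] using hsq.smul (inv_nonneg.2 hpos.le)

/-- The Krein condition: by the Schur product theorem `distMatrix G (u * v)` is positive
semidefinite, and the columns of `distMatrix G w` are eigenvectors of it. -/
lemma sphereInner_mul_nonneg (h : IsDRG G D b c a) {u v w : ℕ → ℝ} {η ζ : ℝ}
    (hu : IsStandardSeq D b c a θ u) (hv : IsStandardSeq D b c a η v)
    (hw : IsStandardSeq D b c a ζ w) : 0 ≤ sphereInner D b c (u * v) w := by
  classical
  obtain ⟨x, -⟩ := h.exists_diam
  set z := (distMatrix G w).col x with hz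
  have hzx : z x = 1 := by simp [hz, distMatrix, hw.zero]
  have hzz : 0 < z ⬝ᵥ z :=
    sum_pos' (fun y _ => mul_self_nonneg (z y)) ⟨x, mem_univ x, by rw [hzx, mul_one]; exact one_pos⟩
  have hschur := (h.posSemidef_distMatrix hu).hadamard (h.posSemidef_distMatrix hv)
  rw [distMatrix_hadamard] at hschur
  have hquad := hschur.dotProduct_mulVec_nonneg z
  rw [star_trivial, h.distMatrix_mulVec (h.adjMatrix_mulVec_col_distMatrix hw x) hw,
    dotProduct_smul, smul_eq_mul] at hquad
  exact nonneg_of_mul_nonneg_left hquad hzz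

end IsDRG

/-! ### A local inequality -/

/-- The vertices adjacent or equal to both `x` and `y`; for adjacent `x` and `y` these are the ends
of the edge together with the common neighbours. -/
noncomputable def closedCommonNeighbors {V : Type*} [Fintype V] (G : SimpleGraph V) (x y : V) :
    Finset V :=
  {z | G.dist x z ≤ 1 ∧ G.dist y z ≤ 1}

/-- The ordered pairs of elements of `S` at distance `2`. -/
noncomputable def pairsAtDistTwo {V : Type*} (G : SimpleGraph V) (S : Finset V) : Finset (V × V) :=
  {p ∈ S ×ˢ S | G.dist p.1 p.2 = 2}

section LocalStructure

variable {V : Type*} {G : SimpleGraph V} {D : ℕ} {b c a : ℕ → ℕ}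

lemma mem_closedCommonNeighbors [Fintype V] {x y z : V} :
    z ∈ closedCommonNeighbors G x y ↔ G.dist x z ≤ 1 ∧ G.dist y z ≤ 1 := by
  simp [closedCommonNeighbors]

lemma mem_pairsAtDistTwo {S : Finset V} {p : V × V} :
    p ∈ pairsAtDistTwo G S ↔ p.1 ∈ S ∧ p.2 ∈ S ∧ G.dist p.1 p.2 = 2 := by
  simp [pairsAtDistTwo, and_assoc]

lemma sum_sum_dist_of_dist_le_two (hG : G.Connected) {S : Finset V}
    (hS : ∀ z ∈ S, ∀ w ∈ S, G.dist z w ≤ 2) (u : ℕ → ℝ) :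
    ∑ z ∈ S, ∑ w ∈ S, u (G.dist z w) =
      #S * (u 0 + (#S - 1) * u 1) + (u 2 - u 1) * #(pairsAtDistTwo G S) := by
  classical
  have hentry : ∀ z ∈ S, ∀ w ∈ S, u (G.dist z w) =
      u 1 + (if z = w then u 0 - u 1 else 0) + if G.dist z w = 2 then u 2 - u 1 else 0 := by
    intro z hz w hw
    have := hS z hz w hw
    have := hG.dist_eq_zero_iff (u := z) (v := w)
    interval_cases G.dist z w <;> simp_all
  have hpairs : ∑ z ∈ S, ∑ w ∈ S, (if G.dist z w = 2 then u 2 - u 1 else 0) =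
      (u 2 - u 1) * #(pairsAtDistTwo G S) := by
    rw [← sum_product', ← sum_filter, ← pairsAtDistTwo, sum_const, nsmul_eq_mul, mul_comm]
  have hdiag : ∑ z ∈ S, ∑ w ∈ S, (if z = w then u 0 - u 1 else 0) = #S * (u 0 - u 1) := by
    simp [mul_sub]
  rw [sum_congr rfl fun z hz => sum_congr rfl (hentry z hz)]
  simp only [sum_add_distrib, hpairs, hdiag, sum_const, nsmul_eq_mul]
  ring

lemma nonneg_of_posSemidef_distMatrix (hG : G.Connected) {S : Finset V}
    (hS : ∀ z ∈ S, ∀ w ∈ S, G.dist z w ≤ 2) {u : ℕ → ℝ} (hu : (distMatrix G u).PosSemidef) :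
    0 ≤ #S * (u 0 + (#S - 1) * u 1) + (u 2 - u 1) * #(pairsAtDistTwo G S) := by
  rw [← sum_sum_dist_of_dist_le_two hG hS]
  have hquad := (hu.submatrix ((↑) : S → V)).dotProduct_mulVec_nonneg 1
  simp only [← sum_coe_sort S]
  simpa [dotProduct, Matrix.mulVec, distMatrix] using hquad

namespace IsDRG

variable [Fintype V]

lemma card_closedCommonNeighbors (h : IsDRG G D b c a) (hD : 1 ≤ D) {x y : V} (hxy : G.Adj x y) :
    #(closedCommonNeighbors G x y) = a 1 + 2 := by
  classical
  have hset : closedCommonNeighbors G x y =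
      insert x (insert y ({z | G.Adj y z ∧ G.dist x z = 1} : Finset V)) := by
    ext z
    simp only [mem_closedCommonNeighbors, mem_insert, mem_filter_univ,
      Nat.le_one_iff_eq_zero_or_eq_one, h.connected.dist_eq_zero_iff, dist_eq_one_iff_adj]
    grind [G.adj_comm x y]
  have hcommon : #{z | G.Adj y z ∧ G.dist x z = 1} = a 1 := by
    rw [← h.card_a 1 hD x y (dist_eq_one_iff_adj.2 hxy)]
    exact (Nat.subtype_card _ (by simp)).symm
  rw [hset, card_insert_of_notMem (by simp [hxy.ne]), card_insert_of_notMem (by simp), hcommon]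

lemma card_pairsAtDistTwo_neighborFinset [DecidableRel G.Adj] (h : IsDRG G D b c a)
    (hD : 1 ≤ D) (x : V) : #(pairsAtDistTwo G (G.neighborFinset x)) = b 0 * b 1 := by
  classical
  have hfiber : ∀ z ∈ G.neighborFinset x, #{w ∈ G.neighborFinset x | G.dist z w = 2} = b 1 := by
    intro z hz
    rw [mem_neighborFinset, adj_comm, ← dist_eq_one_iff_adj] at hz
    rw [← h.card_b 1 hD z x hz]
    exact (Nat.subtype_card _ (by simp)).symm
  rw [pairsAtDistTwo, card_filter, sum_product]
  simp only [← card_filter]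
  rw [sum_congr rfl hfiber, sum_const, card_neighborFinset_eq_degree, h.degree_eq, smul_eq_mul]

lemma card_adj_dist_le_one_le [DecidableRel G.Adj] (h : IsDRG G D b c a) (hD : 2 ≤ D) {x z w : V}
    (hxz : G.Adj x z) (hxw : G.Adj x w) (hzw : G.dist z w = 2) :
    #{y ∈ G.neighborFinset x | G.dist y z ≤ 1 ∧ G.dist y w ≤ 1} ≤ c 2 - 1 := by
  classical
  have hcommon : #{y | G.Adj w y ∧ G.dist z y = 1} = c 2 := by
    rw [← h.card_c 2 hD z w hzw]
    exact (Nat.subtype_card _ (by simp)).symm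
  have hx : x ∈ ({y | G.Adj w y ∧ G.dist z y = 1} : Finset V) := by
    simp [hxw.symm, hxz.symm]
  rw [← hcommon, ← card_erase_of_mem hx]
  refine card_le_card fun y hy => ?_
  simp only [mem_filter, mem_neighborFinset, Nat.le_one_iff_eq_zero_or_eq_one,
    h.connected.dist_eq_zero_iff, dist_eq_one_iff_adj] at hy
  simp only [mem_erase, mem_filter_univ, dist_eq_one_iff_adj]
  have : ¬ G.Adj z w := fun hadj => by simp [dist_eq_one_iff_adj.2 hadj] at hzw
  grind [G.adj_comm y z, G.adj_comm y w, G.adj_comm z w, hy.1.ne]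

lemma exists_adj_card_pairsAtDistTwo_le (h : IsDRG G D b c a) (hD : 2 ≤ D) :
    ∃ x y, G.Adj x y ∧
      #(pairsAtDistTwo G (closedCommonNeighbors G x y)) ≤ b 1 * (c 2 - 1) := by
  classical
  obtain ⟨x, -⟩ := h.exists_diam
  set P := pairsAtDistTwo G (G.neighborFinset x) with hP
  let r (y : V) (p : V × V) : Prop := G.dist y p.1 ≤ 1 ∧ G.dist y p.2 ≤ 1
  have hadj {z w : V} (hz : G.dist x z ≤ 1) (hw : G.dist x w ≤ 1) (hzw : G.dist z w = 2) :
      z ∈ G.neighborFinset x := by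
    rw [mem_neighborFinset, ← dist_eq_one_iff_adj]
    have := h.connected.dist_triangle (u := z) (v := x) (w := w)
    have := G.dist_comm (u := x) (v := z)
    lia
  have hsub : ∀ y ∈ G.neighborFinset x, #(pairsAtDistTwo G (closedCommonNeighbors G x y)) ≤
      #(P.bipartiteAbove r y) := by
    refine fun y _ => card_le_card fun p hp => ?_
    obtain ⟨hz, hw, hzw⟩ := mem_pairsAtDistTwo.1 hp
    rw [mem_closedCommonNeighbors] at hz hw
    rw [mem_bipartiteAbove, hP, mem_pairsAtDistTwo]
    exact ⟨⟨hadj hz.1 hw.1 hzw, hadj hw.1 hz.1 (dist_comm.trans hzw), hzw⟩, hz.2, hw.2⟩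
  have hcount : ∑ y ∈ G.neighborFinset x, #(pairsAtDistTwo G (closedCommonNeighbors G x y)) ≤
      ∑ y ∈ G.neighborFinset x, b 1 * (c 2 - 1) := calc
    _ ≤ ∑ p ∈ P, #((G.neighborFinset x).bipartiteBelow r p) := by
      rw [← sum_card_bipartiteAbove_eq_sum_card_bipartiteBelow]
      exact sum_le_sum hsub
    _ ≤ ∑ p ∈ P, (c 2 - 1) := by
      refine sum_le_sum fun p hp => ?_
      obtain ⟨hz, hw, hzw⟩ := mem_pairsAtDistTwo.1 hp
      exact h.card_adj_dist_le_one_le hD ((G.mem_neighborFinset x _).1 hz)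
        ((G.mem_neighborFinset x _).1 hw) hzw
    _ = _ := by
      rw [sum_const, sum_const, hP, h.card_pairsAtDistTwo_neighborFinset (by lia),
        card_neighborFinset_eq_degree, h.degree_eq, smul_eq_mul, smul_eq_mul, mul_assoc]
  have hne : (G.neighborFinset x).Nonempty := by
    rw [← card_pos, card_neighborFinset_eq_degree, h.degree_eq]
    exact h.b_pos (by lia)
  obtain ⟨y, hy, hle⟩ := exists_le_of_sum_le hne hcount
  exact ⟨x, y, (G.mem_neighborFinset x y).1 hy, hle⟩

/-- An averaging argument finds an edge whose closed common neighbourhood has few pairs at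
distance `2`; the positive semidefinite form is evaluated at its indicator vector. -/
lemma local_nonneg_of_posSemidef_distMatrix (h : IsDRG G D b c a) (hD : 2 ≤ D) {u : ℕ → ℝ}
    (hu : (distMatrix G u).PosSemidef) (h12 : u 1 ≤ u 2) :
    0 ≤ (a 1 + 2) * (u 0 + (a 1 + 1) * u 1) + (u 2 - u 1) * (b 1 * (c 2 - 1) : ℝ) := by
  obtain ⟨x, y, hxy, hle⟩ := h.exists_adj_card_pairsAtDistTwo_le hD
  have hdist : ∀ z ∈ closedCommonNeighbors G x y, ∀ w ∈ closedCommonNeighbors G x y,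
      G.dist z w ≤ 2 := by
    intro z hz w hw
    have hzx : G.dist z x ≤ 1 := G.dist_comm ▸ (mem_closedCommonNeighbors.1 hz).1
    have hxw := (mem_closedCommonNeighbors.1 hw).1
    have := h.connected.dist_triangle (u := z) (v := x) (w := w)
    lia
  have hquad := nonneg_of_posSemidef_distMatrix h.connected hdist hu
  have hpairs : (#(pairsAtDistTwo G (closedCommonNeighbors G x y)) : ℝ) ≤ b 1 * (c 2 - 1) := by
    rw [← Nat.cast_pred (h.c_succ_pos (i := 1) hD)]
    exact_mod_cast hle
  rw [h.card_closedCommonNeighbors (by lia) hxy] at hquad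
  push_cast at hquad
  linear_combination hquad + mul_le_mul_of_nonneg_left hpairs (sub_nonneg.2 h12)

end IsDRG

end LocalStructure

/-! ### Parameters of Shilla graphs -/

lemma IsDRG.isStandardSeq_three_iff {V : Type*} [Fintype V] {G : SimpleGraph V} {b c a : ℕ → ℕ}
    (h : IsDRG G 3 b c a) {θ : ℝ} {u : ℕ → ℝ} :
    IsStandardSeq 3 b c a θ u ↔ u 0 = 1 ∧ b 0 * u 1 = θ ∧ 1 + a 1 * u 1 + b 1 * u 2 = θ * u 1 ∧
      c 2 * u 1 + a 2 * u 2 + b 2 * u 3 = θ * u 2 ∧ c 3 * u 2 + a 3 * u 3 = θ * u 3 := by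
  have hc := h.c_one (by norm_num)
  constructor
  · intro hu
    refine ⟨hu.zero, ?_, ?_, ?_, ?_⟩
    · simpa [intersectionOp, h.c_zero, h.a_zero, hu.zero] using hu.recurrence 0 (by norm_num)
    · simpa [intersectionOp, hc, hu.zero] using hu.recurrence 1 (by norm_num)
    · simpa [intersectionOp] using hu.recurrence 2 (by norm_num)
    · simpa [intersectionOp, h.b_diam] using hu.recurrence 3 le_rfl
  · rintro ⟨h0, h1, h2, h3, h4⟩
    refine ⟨h0, fun i hi => ?_⟩
    interval_cases i <;> simpa [intersectionOp, h.c_zero, h.a_zero, h.b_diam, hc, h0]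

/-- The quadratic whose roots are the eigenvalues of a Shilla graph other than the valency and
`A = a 3`. -/
def shillaQuad (β A b2 c2 θ : ℝ) : ℝ :=
  (θ - A) * (θ + β) + (θ + β) * b2 + (θ + 1) * c2

/-- The standard sequence of a Shilla graph with `A = a 3` for a root `θ` of its quadratic. -/
noncomputable def shillaSeq (β A θ : ℝ) : ℕ → ℝ
  | 0 => 1
  | 1 => θ / (β * A)
  | 2 => (θ - A) * (θ + β) / (A * β * (β - 1) * (A + 1))
  | _ => (θ + β) / (β * (A + 1))

/-- The standard sequence of a Shilla graph for the eigenvalue `a 3`. -/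
noncomputable def shillaSeqSecond (β b2 c2 : ℝ) : ℕ → ℝ
  | 0 => 1
  | 1 => 1 / β
  | 2 => 0
  | _ => -c2 / (β * b2)

lemma shillaQuad_exists_root_lt {β A b2 c2 : ℝ} (hβ : 1 < β) (hc2 : 0 < c2) :
    ∃ θ < -β, shillaQuad β A b2 c2 θ = 0 := by
  set s := A - β - b2 - c2 with hs
  set d := s ^ 2 - 4 * (β * b2 + c2 - β * A) with hd
  have hlt : (s + 2 * β) ^ 2 < d := by nlinarith only [mul_pos (sub_pos.2 hβ) hc2, hs, hd]
  have hd0 : 0 ≤ d := (sq_nonneg _).trans hlt.le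
  refine ⟨(s - √d) / 2, by linarith only [Real.lt_sqrt_of_sq_lt hlt], ?_⟩
  rw [shillaQuad]
  linear_combination (1 / 4) * Real.sq_sqrt hd0 + ((s - √d) / 2) * hs + (1 / 4) * hd

namespace IsShilla

variable {V : Type*} [Fintype V] [DecidableEq V] {G : SimpleGraph V} [DecidableRel G.Adj]
  {b c a : ℕ → ℕ} {β : ℕ} {θ : ℝ}

lemma b_two_pos (hG : IsShilla G b c a) : (0 : ℝ) < b 2 :=
  Nat.cast_pos.2 (hG.drg.b_pos (by norm_num))

lemma c_two_pos (hG : IsShilla G b c a) : (0 : ℝ) < c 2 :=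
  Nat.cast_pos.2 (hG.drg.c_succ_pos (i := 1) (by norm_num))

lemma valency_eq (hG : IsShilla G b c a) (hβ : a 3 = a 1 + β) : b 0 = β * a 3 := by
  obtain ⟨u, hu⟩ := hG.drg.isEig_iff_exists_isStandardSeq.1 hG.second.1
  obtain ⟨-, h0, h1, -, h3⟩ := hG.drg.isStandardSeq_three_iff.1 hu
  have hc3 : (c 3 : ℝ) ≠ 0 := Nat.cast_ne_zero.2 (hG.drg.c_succ_pos (i := 2) (by norm_num)).ne'
  have hu2 : u 2 = 0 := by simpa [hc3] using h3
  have hβ' : (a 3 : ℝ) = a 1 + β := by exact_mod_cast hβ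
  rw [hu2, hβ'] at h1
  have hu1 : β * u 1 = 1 := by linear_combination -h1
  have hk : (b 0 : ℝ) = β * a 3 := by linear_combination β * h0 - b 0 * hu1
  exact_mod_cast hk

lemma a_three_pos (hG : IsShilla G b c a) (hβ : a 3 = a 1 + β) : 0 < a 3 :=
  Nat.pos_of_mul_pos_left (hG.valency_eq hβ ▸ hG.drg.b_pos (by norm_num))

lemma two_le (hG : IsShilla G b c a) (hβ : a 3 = a 1 + β) : 2 ≤ β := by
  have hlt : a 3 < b 0 := by exact_mod_cast hG.second.2.1
  rw [hG.valency_eq hβ] at hlt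
  exact (lt_mul_iff_one_lt_left (hG.a_three_pos hβ)).1 hlt

lemma intersection_numbers_eq (hG : IsShilla G b c a) (hβ : a 3 = a 1 + β) :
    (b 0 : ℝ) = β * a 3 ∧ (a 1 : ℝ) = a 3 - β ∧ (b 1 : ℝ) = (β - 1) * (a 3 + 1) ∧
      (a 2 : ℝ) = β * a 3 - b 2 - c 2 ∧ (c 3 : ℝ) = (β - 1) * a 3 := by
  have h0 : (b 0 : ℝ) = β * a 3 := by exact_mod_cast hG.valency_eq hβ
  have hβ' : (a 3 : ℝ) = a 1 + β := by exact_mod_cast hβ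
  have h1 : (c 1 + a 1 + b 1 : ℝ) = b 0 := by exact_mod_cast hG.drg.c_add_a_add_b (by norm_num)
  have h2 : (c 2 + a 2 + b 2 : ℝ) = b 0 := by exact_mod_cast hG.drg.c_add_a_add_b (by norm_num)
  have h3 : (c 3 + a 3 + b 3 : ℝ) = b 0 := by exact_mod_cast hG.drg.c_add_a_add_b le_rfl
  rw [hG.drg.c_one (by norm_num), Nat.cast_one] at h1
  rw [hG.drg.b_diam, Nat.cast_zero] at h3
  refine ⟨h0, ?_, ?_, ?_, ?_⟩ <;> linarith only [h0, hβ', h1, h2, h3]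

lemma shillaQuad_eq_zero (hG : IsShilla G b c a) (hβ : a 3 = a 1 + β) (hθ : IsEig G θ)
    (hk : θ ≠ b 0) (ha : θ ≠ a 3) : shillaQuad β (a 3) (b 2) (c 2) θ = 0 := by
  obtain ⟨u, hu⟩ := hG.drg.isEig_iff_exists_isStandardSeq.1 hθ
  obtain ⟨-, h1, h2, h3, h4⟩ := hG.drg.isStandardSeq_three_iff.1 hu
  obtain ⟨hb0, ha1, hb1, ha2, hc3⟩ := hG.intersection_numbers_eq hβ
  rw [hb0] at h1 hk
  rw [ha1, hb1] at h2
  rw [ha2] at h3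
  rw [hc3] at h4
  have hu2 : β * a 3 * ((β - 1) * (a 3 + 1)) * u 2 = (θ - a 3) * (θ + β) := by
    linear_combination β * a 3 * h2 + (θ - a 3 + β) * h1
  have hu3 : β * a 3 * ((β - 1) * (a 3 + 1)) * u 3 = (β - 1) * a 3 * (θ + β) := by
    apply mul_left_cancel₀ (sub_ne_zero.2 ha)
    linear_combination (β - 1) * a 3 * hu2 - β * a 3 * ((β - 1) * (a 3 + 1)) * h4
  apply mul_left_cancel₀ (sub_ne_zero.2 hk)
  rw [shillaQuad]
  linear_combination c 2 * (β - 1) * (a 3 + 1) * h1 + (β * a 3 - b 2 - c 2 - θ) * hu2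
    + b 2 * hu3 - β * a 3 * ((β - 1) * (a 3 + 1)) * h3

lemma isStandardSeq_shillaSeq (hG : IsShilla G b c a) (hβ : a 3 = a 1 + β)
    (hθ : shillaQuad β (a 3) (b 2) (c 2) θ = 0) :
    IsStandardSeq 3 b c a θ (shillaSeq β (a 3) θ) := by
  have hA : (0 : ℝ) < a 3 := Nat.cast_pos.2 (hG.a_three_pos hβ)
  have hB : (1 : ℝ) < β := Nat.one_lt_cast.2 (hG.two_le hβ)
  have hB1 : (β : ℝ) - 1 ≠ 0 := (sub_pos.2 hB).ne'
  obtain ⟨hb0, ha1, hb1, ha2, hc3⟩ := hG.intersection_numbers_eq hβ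
  rw [shillaQuad] at hθ
  rw [hG.drg.isStandardSeq_three_iff]
  simp only [shillaSeq, hb0, ha1, hb1, ha2, hc3]
  refine ⟨trivial, ?_, ?_, ?_, ?_⟩ <;> field_simp
  · ring
  · linear_combination (β * a 3 - θ) * hθ
  · ring

lemma isStandardSeq_shillaSeqSecond (hG : IsShilla G b c a) (hβ : a 3 = a 1 + β) :
    IsStandardSeq 3 b c a (a 3) (shillaSeqSecond β (b 2) (c 2)) := by
  have hB : (β : ℝ) ≠ 0 := Nat.cast_ne_zero.2 (zero_lt_two.trans_le (hG.two_le hβ)).ne'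
  have hb2 := hG.b_two_pos.ne'
  obtain ⟨hb0, ha1, hb1, ha2, hc3⟩ := hG.intersection_numbers_eq hβ
  rw [hG.drg.isStandardSeq_three_iff]
  simp only [shillaSeqSecond, hb0, ha1, hb1, ha2, hc3]
  refine ⟨trivial, ?_, ?_, ?_, ?_⟩ <;> field_simp <;> ring

lemma sphereInner_eq (hG : IsShilla G b c a) (hβ : a 3 = a 1 + β) (f g : ℕ → ℝ) :
    sphereInner 3 b c f g = f 0 * g 0 + β * a 3 * (f 1 * g 1)
      + β * a 3 * (β - 1) * (a 3 + 1) / c 2 * (f 2 * g 2)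
      + β * (a 3 + 1) * b 2 / c 2 * (f 3 * g 3) := by
  have hA : (a 3 : ℝ) ≠ 0 := Nat.cast_ne_zero.2 (hG.a_three_pos hβ).ne'
  have hB : (1 : ℝ) < β := Nat.one_lt_cast.2 (hG.two_le hβ)
  have hB1 : (β : ℝ) - 1 ≠ 0 := (sub_pos.2 hB).ne'
  have hc2 := hG.c_two_pos.ne'
  obtain ⟨hb0, -, hb1, -, hc3⟩ := hG.intersection_numbers_eq hβ
  simp only [sphereInner, sphereSize, sum_range_succ, prod_range_succ, range_zero, sum_empty,
    prod_empty, zero_add, one_mul, Nat.reduceAdd, hG.drg.c_one (by norm_num), hb0, hb1, hc3]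
  field_simp
  ring

lemma smallestEig_lt (hG : IsShilla G b c a) (hβ : a 3 = a 1 + β) (hθ : IsSmallestEig G θ) :
    θ < -β := by
  obtain ⟨η, hη, hη0⟩ := shillaQuad_exists_root_lt (A := a 3) (b2 := b 2)
    (Nat.one_lt_cast.2 (hG.two_le hβ)) hG.c_two_pos
  have hη_eig : IsEig G η :=
    hG.drg.isEig_iff_exists_isStandardSeq.2 ⟨_, hG.isStandardSeq_shillaSeq hβ hη0⟩
  exact (hθ.2 η hη_eig).trans_lt hη

/-- This is the Krein condition `q³₁₁ ≥ 0`. -/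
lemma krein (hG : IsShilla G b c a) (hβ : a 3 = a 1 + β)
    (hθ : shillaQuad β (a 3) (b 2) (c 2) θ = 0) :
    β * ((β - 1) * c 2) ≤ (β ^ 2 + θ) * (b 2 + c 2) := by
  have hA : (a 3 : ℝ) ≠ 0 := Nat.cast_ne_zero.2 (hG.a_three_pos hβ).ne'
  have hB : (β : ℝ) ≠ 0 := Nat.cast_ne_zero.2 (zero_lt_two.trans_le (hG.two_le hβ)).ne'
  have hb2 := hG.b_two_pos.ne'
  have hc2 := hG.c_two_pos.ne'
  have hnonneg := hG.drg.sphereInner_mul_nonneg (hG.isStandardSeq_shillaSeqSecond hβ)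
    (hG.isStandardSeq_shillaSeqSecond hβ) (hG.isStandardSeq_shillaSeq hβ hθ)
  have hinner : sphereInner 3 b c
      (shillaSeqSecond β (b 2) (c 2) * shillaSeqSecond β (b 2) (c 2)) (shillaSeq β (a 3) θ) =
      (β * (β * b 2 + c 2) + θ * (b 2 + c 2)) / (β ^ 2 * b 2) := by
    rw [hG.sphereInner_eq hβ]
    simp only [Pi.mul_apply, shillaSeqSecond, shillaSeq]
    field_simp
    ring
  rw [hinner] at hnonneg
  have hpos : (0 : ℝ) < β ^ 2 * b 2 := mul_pos (by positivity) hG.b_two_pos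
  have hnum := mul_nonneg hnonneg hpos.le
  rw [div_mul_cancel₀ _ hpos.ne'] at hnum
  linear_combination hnum

lemma local_inequality (hG : IsShilla G b c a) (hβ : a 3 = a 1 + β)
    (hθ : shillaQuad β (a 3) (b 2) (c 2) θ = 0) (hθβ : θ ≤ -β) :
    0 ≤ (a 3 - β + 2) * (β * a 3 + (a 3 - β + 1) * θ)
      + (θ + 1) * (θ - β * a 3) * (c 2 - 1) := by
  have hA : (0 : ℝ) < a 3 := Nat.cast_pos.2 (hG.a_three_pos hβ)
  have hB : (1 : ℝ) < β := Nat.one_lt_cast.2 (hG.two_le hβ)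
  have hB1 : (0 : ℝ) < β - 1 := sub_pos.2 hB
  have hu := hG.isStandardSeq_shillaSeq hβ hθ
  have h12 : shillaSeq β (a 3) θ 1 ≤ shillaSeq β (a 3) θ 2 :=
    (div_nonpos_of_nonpos_of_nonneg (by linarith only [hθβ, hB]) (by positivity)).trans
      (div_nonneg (mul_nonneg_of_nonpos_of_nonpos (by linarith only [hθβ, hB, hA])
        (by linarith only [hθβ])) (by positivity))
  have hlocal := hG.drg.local_nonneg_of_posSemidef_distMatrix (by norm_num)
    (hG.drg.posSemidef_distMatrix hu) h12
  obtain ⟨-, ha1, hb1, -, -⟩ := hG.intersection_numbers_eq hβ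
  simp only [shillaSeq, ha1, hb1] at hlocal
  have hscaled := mul_nonneg (mul_nonneg (Nat.cast_nonneg (α := ℝ) β) hA.le) hlocal
  refine hscaled.trans_eq ?_
  field_simp
  ring

end IsShilla

/-! ### Shilla graphs with a very small eigenvalue -/

lemma exists_int_eq_of_sq_eq {r : ℚ} {s p : ℤ} (h : r ^ 2 = s * r - p) : ∃ n : ℤ, r = n := by
  have hr : IsIntegral ℤ r := by
    refine ⟨Polynomial.X ^ 2 + (-Polynomial.C s * Polynomial.X + Polynomial.C p),
      by monicity!, ?_⟩
    simp only [Polynomial.eval₂_add, Polynomial.eval₂_mul, Polynomial.eval₂_neg,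
      Polynomial.eval₂_pow, Polynomial.eval₂_X, Polynomial.eval₂_C, eq_intCast (algebraMap ℤ ℚ)]
    linear_combination h
  obtain ⟨n, hn⟩ := IsIntegrallyClosed.isIntegral_iff.1 hr
  exact ⟨n, by simpa using hn.symm⟩

lemma exists_int_eq_of_shillaQuad_eq_zero {β A b2 c2 : ℤ} {θ : ℝ}
    (hθ : shillaQuad β A b2 c2 θ = 0) (hrat : ¬ Irrational θ) : ∃ n : ℤ, θ = n := by
  obtain ⟨r, rfl⟩ := not_not.1 hrat
  have hsq : (r : ℝ) ^ 2 = (A - β - b2 - c2 : ℤ) * r - (β * b2 + c2 - β * A : ℤ) := by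
    rw [shillaQuad] at hθ
    push_cast
    linear_combination hθ
  obtain ⟨n, hn⟩ := exists_int_eq_of_sq_eq (r := r) (by exact_mod_cast hsq)
  exact ⟨n, by rw [hn, Rat.cast_intCast]⟩

lemma eq_zero_of_intCast_mul_irrational_eq {x : ℝ} (hx : Irrational x) {m n : ℤ}
    (h : m * x = n) : m = 0 := by
  by_contra hm
  exact (hx.intCast_mul hm).ne_int n h

/-- The coefficient of `θ` in the norm of the standard sequence `shillaSeq β A θ`, after clearing
denominators and reducing by the quadratic of `θ`; here `S = b 2 + c 2`. -/
def shillaNormCoeff (β A c2 S : ℤ) : ℤ :=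
  (A + β - S) * (S ^ 2 + (β - 1) * A * S + (β - 1) * c2) - 2 * (β - 1) * c2 * (S + β * A + β)

section NormCoeff

variable {β A c2 S : ℤ}

lemma lt_add_of_shillaNormCoeff_eq_zero (hβ : 1 < β) (hA : 0 ≤ A) (hc2 : 0 < c2) (hS : 0 < S)
    (h : shillaNormCoeff β A c2 S = 0) : S < A + β := by
  have hβ1 : 0 < β - 1 := sub_pos.2 hβ
  rw [shillaNormCoeff, sub_eq_zero] at h
  refine sub_pos.1 (pos_of_mul_pos_left (b := S ^ 2 + (β - 1) * A * S + (β - 1) * c2) ?_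
    (by positivity))
  rw [h]
  positivity

lemma mul_lt_of_shillaNormCoeff_eq_zero (hβ : 1 ≤ β) (hA : 0 ≤ A) (hc2 : 0 ≤ c2) (hS : 0 < S)
    (hSA : S ≤ A + β) (hc2S : β * ((β - 1) * c2) < 2 * S) (h : shillaNormCoeff β A c2 S = 0) :
    β * (A + β - S) * (S + (β - 1) * A) < 4 * (S + β * A + β) := by
  have hrhs : β * (2 * (β - 1) * c2 * (S + β * A + β)) < 4 * S * (S + β * A + β) := by
    have : 0 < S + β * A + β := by positivity
    linear_combination 2 * mul_lt_mul_of_pos_right hc2S this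
  have hdrop : 0 ≤ β * (A + β - S) * ((β - 1) * c2) := by
    have := sub_nonneg.2 hβ
    have := sub_nonneg.2 hSA
    positivity
  refine lt_of_mul_lt_mul_left ?_ hS.le
  rw [shillaNormCoeff] at h
  linear_combination hrhs + β * h + hdrop

lemma eq_add_sub_one_and_le_four_of_mul_lt (hβ : 3 ≤ β) (hA : 16 ≤ A) (hS : 0 < S)
    (hSA : S < A + β) (h : β * (A + β - S) * (S + (β - 1) * A) < 4 * (S + β * A + β)) :
    S = A + β - 1 ∧ β ≤ 4 := by
  obtain ⟨δ, rfl⟩ : ∃ δ, S = A + β - δ := ⟨_, (sub_sub_cancel _ _).symm⟩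
  have hβA : 3 * A ≤ β * A := mul_le_mul_of_nonneg_right hβ (by lia)
  have hβ4 : β ≤ 4 := by
    have hδ1 : β * A + β - 1 ≤ δ * (β * A + β - δ) := by
      nlinarith only [mul_nonneg (show 0 ≤ δ - 1 by lia) (show 0 ≤ β * A + β - 1 - δ by lia)]
    by_contra! hβ5
    have hcoef : 0 ≤ β ^ 2 - 4 * β - 4 := by nlinarith only [hβ5]
    nlinarith only [mul_le_mul_of_nonneg_left hδ1 (show 0 ≤ β by lia), h, hSA, hβ5,
      mul_le_mul_of_nonneg_right hA hcoef]
  refine ⟨?_, hβ4⟩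
  by_contra hne
  have hδ2 : 2 * (β * A + β - 2) ≤ δ * (β * A + β - δ) := by
    nlinarith only [mul_nonneg (show 0 ≤ δ - 2 by lia) (show 0 ≤ β * A + β - 2 - δ by lia)]
  obtain rfl | rfl : β = 3 ∨ β = 4 := by lia
  · linarith only [h, hδ2, hA, hSA]
  · linarith only [h, hδ2, hA, hSA]

-- Eliminating `c2` exhibits a number linear in `A` as a divisor of a constant.
lemma two_mul_le_of_shillaNormCoeff_add_sub_one_eq_zero (hβ : 3 ≤ β) (hβ4 : β ≤ 4)
    (h : shillaNormCoeff β A c2 (A + β - 1) = 0) :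
    2 * (A + β - 1) ≤ β * (β ^ 2 - β - 2) ^ 2 := by
  rw [shillaNormCoeff] at h
  obtain rfl | rfl : β = 3 ∨ β = 4 := by lia
  · have hdvd : 8 * A + 9 ∣ 77 := ⟨24 * A + 37 - 128 * c2, by linear_combination -64 * h⟩
    linarith only [Int.le_of_dvd (by norm_num) hdvd]
  · have hdvd : 10 * A + 13 ∣ 374 := ⟨40 * A + 98 - 300 * c2, by linear_combination -100 * h⟩
    linarith only [Int.le_of_dvd (by norm_num) hdvd]

lemma two_mul_le_of_shillaNormCoeff_eq_zero (hβ : 3 ≤ β) (hA : 0 ≤ A) (hc2 : 0 < c2) (hS : 0 < S)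
    (hc2S : β * ((β - 1) * c2) < 2 * S) (h : shillaNormCoeff β A c2 S = 0) :
    2 * S ≤ β * (β ^ 2 - β - 2) ^ 2 := by
  by_contra! hlt
  have hSA := lt_add_of_shillaNormCoeff_eq_zero (by lia) hA hc2 hS h
  have hA16 : 16 ≤ A := by
    have hgap : 4 ≤ β ^ 2 - β - 2 := by nlinarith only [hβ]
    have hsq : 16 * β ≤ β * (β ^ 2 - β - 2) ^ 2 := by nlinarith only [hgap, hβ]
    linarith only [hsq, hlt, hSA, hβ]
  obtain ⟨rfl, hβ4⟩ := eq_add_sub_one_and_le_four_of_mul_lt hβ hA16 hS hSA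
    (mul_lt_of_shillaNormCoeff_eq_zero (by lia) hA hc2.le hS hSA.le hc2S h)
  exact hlt.not_ge (two_mul_le_of_shillaNormCoeff_add_sub_one_eq_zero hβ hβ4 h)

end NormCoeff

lemma exists_eq_mul_of_shillaQuad_one_sub_sq {β A b2 c2 : ℤ} (hβ : 3 ≤ β) (hc2 : 0 < c2)
    (hθ : shillaQuad β A b2 c2 (1 - β ^ 2) = 0) :
    ∃ t : ℤ, 1 ≤ t ∧ c2 = (β ^ 2 - β - 1) * t ∧ b2 + c2 = A + β ^ 2 - 1 - (β - 1) * t := by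
  have hθ' : (β ^ 2 - β - 1) * (A + β ^ 2 - 1 - (b2 + c2)) = (β - 1) * c2 := by
    have : ((β : ℝ) ^ 2 - β - 1) * (A + β ^ 2 - 1 - (b2 + c2)) = (β - 1) * c2 := by
      rw [shillaQuad] at hθ
      linear_combination hθ
    exact_mod_cast this
  have hcop : IsCoprime (β ^ 2 - β - 1) (β - 1) := ⟨-1, β, by ring⟩
  have hpos : 0 < β ^ 2 - β - 1 := by nlinarith only [hβ]
  obtain ⟨t, rfl⟩ := hcop.dvd_of_dvd_mul_left ⟨_, hθ'.symm⟩
  refine ⟨t, (mul_pos_iff_of_pos_left hpos).1 hc2, rfl, ?_⟩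
  have hcancel : A + β ^ 2 - 1 - (b2 + (β ^ 2 - β - 1) * t) = (β - 1) * t :=
    mul_left_cancel₀ hpos.ne' (by linear_combination hθ')
  linear_combination -hcancel

lemma local_inequality_one_sub_sq_neg {β t A : ℝ} (hβ : 3 ≤ β) (ht : 1 ≤ t)
    (hA : t * ((β ^ 2 - β - 1) ^ 2 + β ^ 2 - 2) - β ^ 2 + 1 ≤ A) :
    (A - β + 2) * (β * A + (A - β + 1) * (1 - β ^ 2))
      + (1 - β ^ 2 + 1) * (1 - β ^ 2 - β * A) * ((β ^ 2 - β - 1) * t - 1) < 0 := by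
  obtain ⟨B, rfl⟩ : ∃ B, β = B + 3 := ⟨_, (sub_add_cancel _ _).symm⟩
  obtain ⟨T, rfl⟩ : ∃ T, t = T + 1 := ⟨_, (sub_add_cancel _ _).symm⟩
  obtain ⟨R, rfl⟩ : ∃ R, A =
      (T + 1) * (((B + 3) ^ 2 - (B + 3) - 1) ^ 2 + (B + 3) ^ 2 - 2) - (B + 3) ^ 2 + 1 + R :=
    ⟨_, (add_sub_cancel _ _).symm⟩
  have hB : 0 ≤ B := by linarith only [hβ]
  have hT : 0 ≤ T := by linarith only [ht]
  have hR : 0 ≤ R := by linarith only [hA]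
  rw [← neg_pos]
  ring_nf
  positivity

namespace IsShilla

variable {V : Type*} [Fintype V] [DecidableEq V] {G : SimpleGraph V} [DecidableRel G.Adj]
  {b c a : ℕ → ℕ} {β : ℕ} {θ : ℝ}

lemma mul_sphereInner_shillaSeq (hG : IsShilla G b c a) (hβ : a 3 = a 1 + β) (θ : ℝ) :
    a 3 * β * (β - 1) * (a 3 + 1) * c 2 *
        sphereInner 3 b c (shillaSeq β (a 3) θ) (shillaSeq β (a 3) θ) =
      a 3 * β * (β - 1) * (a 3 + 1) * c 2 + (β - 1) * (a 3 + 1) * c 2 * θ ^ 2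
        + ((θ - a 3) * (θ + β)) ^ 2 + (β - 1) * a 3 * b 2 * (θ + β) ^ 2 := by
  have hA : (a 3 : ℝ) ≠ 0 := Nat.cast_ne_zero.2 (hG.a_three_pos hβ).ne'
  have hB : (1 : ℝ) < β := Nat.one_lt_cast.2 (hG.two_le hβ)
  have hB1 : (β : ℝ) - 1 ≠ 0 := (sub_pos.2 hB).ne'
  have hc2 := hG.c_two_pos.ne'
  rw [hG.sphereInner_eq hβ]
  simp only [shillaSeq]
  field_simp

lemma exists_sphereInner_shillaSeq_eq (hG : IsShilla G b c a) (hβ : a 3 = a 1 + β)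
    (hθ : shillaQuad β (a 3) (b 2) (c 2) θ = 0) :
    ∃ M : ℤ, a 3 * β * (β - 1) * (a 3 + 1) * c 2 *
        sphereInner 3 b c (shillaSeq β (a 3) θ) (shillaSeq β (a 3) θ) =
      shillaNormCoeff β (a 3) (c 2) (b 2 + c 2) * θ + M := by
  obtain ⟨S, hS⟩ : ∃ S : ℤ, (S : ℝ) = b 2 + c 2 := ⟨b 2 + c 2, by push_cast; rfl⟩
  obtain ⟨T, hT⟩ : ∃ T : ℤ, (T : ℝ) = c 2 + β * b 2 := ⟨c 2 + β * b 2, by push_cast; rfl⟩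
  obtain ⟨p, hp⟩ : ∃ p : ℤ, (p : ℝ) = T - β * a 3 := ⟨T - β * a 3, by push_cast; rfl⟩
  have hlin : (θ - a 3) * (θ + β) = -(S * θ + T) := by
    rw [shillaQuad] at hθ
    rw [hS, hT]
    linear_combination hθ
  have hsq : θ ^ 2 = (a 3 - β - S) * θ - p := by
    rw [hp]
    linear_combination hlin
  refine ⟨a 3 * β * (β - 1) * (a 3 + 1) * c 2 - (β - 1) * (a 3 + 1) * c 2 * p - S ^ 2 * p + T ^ 2
    + (β - 1) * a 3 * b 2 * (β ^ 2 - p), ?_⟩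
  have hcoeff : ((β - 1) * (a 3 + 1) * c 2 + S ^ 2) * (a 3 - β - S) + 2 * S * T
        + (β - 1) * a 3 * b 2 * (a 3 + β - S) =
      (shillaNormCoeff β (a 3) (c 2) (b 2 + c 2) : ℝ) := by
    rw [shillaNormCoeff, hS, hT]
    push_cast
    ring
  rw [hG.mul_sphereInner_shillaSeq hβ, hlin]
  push_cast
  linear_combination ((β - 1) * (a 3 + 1) * c 2 + S ^ 2 + (β - 1) * a 3 * b 2) * hsq + θ * hcoeff

/-- The norm of the standard sequence is the order of the graph divided by the multiplicity of
`θ`, hence rational. -/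
lemma shillaNormCoeff_eq_zero_of_irrational (hG : IsShilla G b c a) (hβ : a 3 = a 1 + β)
    (hθ : shillaQuad β (a 3) (b 2) (c 2) θ = 0) (hirr : Irrational θ) :
    shillaNormCoeff β (a 3) (c 2) (b 2 + c 2) = 0 := by
  obtain ⟨M, hM⟩ := hG.exists_sphereInner_shillaSeq_eq hβ hθ
  have hmult := hG.drg.eigMult_mul_sphereInner (hG.isStandardSeq_shillaSeq hβ hθ)
  have hm : (eigMult G θ : ℤ) ≠ 0 := by
    intro h0
    have : Nonempty V := hG.drg.connected.nonempty
    rw [Nat.cast_eq_zero.1 h0, Nat.cast_zero, zero_mul] at hmult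
    exact Fintype.card_ne_zero (Nat.cast_eq_zero.1 hmult.symm)
  refine (mul_eq_zero.1 ?_).resolve_left hm
  refine eq_zero_of_intCast_mul_irrational_eq hirr
    (n := a 3 * β * (β - 1) * (a 3 + 1) * c 2 * Fintype.card V - eigMult G θ * M) ?_
  push_cast
  linear_combination a 3 * β * (β - 1) * (a 3 + 1) * c 2 * hmult - eigMult G θ * hM

lemma not_irrational (hG : IsShilla G b c a) (hβ : a 3 = a 1 + β) (h3 : 3 ≤ β)
    (hθ : shillaQuad β (a 3) (b 2) (c 2) θ = 0) (hlt : θ < -(β : ℝ) ^ 2 + 2) :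
    ¬ Irrational θ := by
  intro hirr
  have hB : (3 : ℝ) ≤ β := by exact_mod_cast h3
  have hS : (0 : ℝ) < b 2 + c 2 := add_pos hG.b_two_pos hG.c_two_pos
  have hc2S : (β * ((β - 1) * c 2) : ℝ) < 2 * (b 2 + c 2) :=
    (hG.krein hβ hθ).trans_lt (mul_lt_mul_of_pos_right (by linarith only [hlt]) hS)
  have hcoeff := hG.shillaNormCoeff_eq_zero_of_irrational hβ hθ hirr
  have hSA : (b 2 + c 2 : ℝ) < a 3 + β := by
    exact_mod_cast lt_add_of_shillaNormCoeff_eq_zero (by lia) (Int.natCast_nonneg _)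
      (by exact_mod_cast hG.c_two_pos) (by exact_mod_cast hS) hcoeff
  have hle : (2 * (b 2 + c 2) : ℝ) ≤ β * (β ^ 2 - β - 2) ^ 2 := by
    exact_mod_cast two_mul_le_of_shillaNormCoeff_eq_zero (by exact_mod_cast h3)
      (Int.natCast_nonneg _) (by exact_mod_cast hG.c_two_pos) (by exact_mod_cast hS)
      (by exact_mod_cast hc2S) hcoeff
  have hprod : (-θ - β) * (-θ - β + (a 3 + β - (b 2 + c 2))) = (β - 1) * c 2 := by
    rw [shillaQuad] at hθ
    linear_combination hθ
  have hgap : (0 : ℝ) ≤ β ^ 2 - β - 2 := by nlinarith only [hB]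
  have hsq : ((β : ℝ) ^ 2 - β - 2) ^ 2 ≤ (β - 1) * c 2 := by
    rw [← hprod, sq]
    exact mul_le_mul (by linarith only [hlt]) (by linarith only [hlt, hSA]) hgap
      (by linarith only [hlt, hgap])
  linarith only [mul_le_mul_of_nonneg_left hsq (by positivity : (0 : ℝ) ≤ β), hle, hc2S]

lemma shillaQuad_one_sub_sq_ne_zero (hG : IsShilla G b c a) (hβ : a 3 = a 1 + β) (h3 : 3 ≤ β) :
    shillaQuad β (a 3) (b 2) (c 2) (1 - β ^ 2) ≠ 0 := by
  intro hθ
  have hB : (3 : ℝ) ≤ β := by exact_mod_cast h3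
  obtain ⟨t, ht, hc2, hS⟩ := exists_eq_mul_of_shillaQuad_one_sub_sq (β := β) (A := a 3)
    (b2 := b 2) (c2 := c 2) (by exact_mod_cast h3) (by exact_mod_cast hG.c_two_pos)
    (by exact_mod_cast hθ)
  have ht' : (1 : ℝ) ≤ t := by exact_mod_cast ht
  have hc2' : (c 2 : ℝ) = (β ^ 2 - β - 1) * t := by exact_mod_cast hc2
  have hS' : (b 2 + c 2 : ℝ) = a 3 + β ^ 2 - 1 - (β - 1) * t := by exact_mod_cast hS
  have hkrein := hG.krein hβ hθ
  rw [hS', hc2'] at hkrein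
  have hlocal := hG.local_inequality hβ hθ (by nlinarith only [hB])
  rw [hc2'] at hlocal
  exact hlocal.not_gt (local_inequality_one_sub_sq_neg hB ht' (by linarith only [hkrein]))

lemma neg_sq_lt (hG : IsShilla G b c a) (hβ : a 3 = a 1 + β)
    (hθ : shillaQuad β (a 3) (b 2) (c 2) θ = 0) : -(β : ℝ) ^ 2 < θ := by
  have hB : (1 : ℝ) < β := Nat.one_lt_cast.2 (hG.two_le hβ)
  have hpos : (0 : ℝ) < β * ((β - 1) * c 2) :=
    mul_pos (by positivity) (mul_pos (sub_pos.2 hB) hG.c_two_pos)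
  have := pos_of_mul_pos_left (hpos.trans_le (hG.krein hβ hθ))
    (add_pos hG.b_two_pos hG.c_two_pos).le
  linarith only [this]

lemma neg_sq_add_two_le (hG : IsShilla G b c a) (hβ : a 3 = a 1 + β) (h3 : 3 ≤ β)
    (hθ : IsEig G θ) : -(β : ℝ) ^ 2 + 2 ≤ θ := by
  by_contra! hlt
  have hneg : θ < 0 := by
    have hB : (3 : ℝ) ≤ β := by exact_mod_cast h3
    nlinarith only [hB, hlt]
  have hquad := hG.shillaQuad_eq_zero hβ hθ (hneg.trans_le (Nat.cast_nonneg _)).ne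
    (hneg.trans_le (Nat.cast_nonneg _)).ne
  obtain ⟨n, rfl⟩ := exists_int_eq_of_shillaQuad_eq_zero (β := β) (A := a 3) (b2 := b 2)
    (c2 := c 2) (by exact_mod_cast hquad) (hG.not_irrational hβ h3 hquad hlt)
  have hn : n = 1 - (β : ℤ) ^ 2 := by
    have hlow : -(β : ℤ) ^ 2 < n := by exact_mod_cast hG.neg_sq_lt hβ hquad
    have hup : n < -(β : ℤ) ^ 2 + 2 := by exact_mod_cast hlt
    lia
  rw [hn] at hquad
  exact hG.shillaQuad_one_sub_sq_ne_zero hβ h3 (by exact_mod_cast hquad)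

end IsShilla

/-- For a Shilla distance-regular graph with `b = b(Γ)` and smallest eigenvalue `θ₃`:
`θ₃ < -b² + 2` if and only if `b = 2`. -/
theorem stmt18 {V : Type*} [Fintype V] [DecidableEq V] (G : SimpleGraph V)
    [DecidableRel G.Adj] (b c a : ℕ → ℕ) (hG : IsShilla G b c a)
    (β : ℕ) (hβ : a 3 = a 1 + β)
    (θ3 : ℝ) (h3 : IsSmallestEig G θ3) :
    θ3 < -(β : ℝ) ^ 2 + 2 ↔ β = 2 := by
  constructor
  · intro hlt
    by_contra hne
    have htwo := hG.two_le hβ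
    exact hlt.not_ge (hG.neg_sq_add_two_le hβ (by lia) h3.1)
  · rintro rfl
    have hlt := hG.smallestEig_lt hβ h3
    norm_num at hlt ⊢
    exact hlt
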